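/- Let M_1, …, M_k be matroids on pairwise disjoint ground sets and let S be a matroid polytope subdivision of the matroid polytope Q(M_1 ⊕ ⋯ ⊕ M_k) of their direct sum. Then, under the identification Q(M_1 ⊕ ⋯ ⊕ M_k) ≅ Q(M_1) × ⋯ × Q(M_k), one has S = S_1 × ⋯ × S_k, where each S_i is a subdivision of Q(M_i). -/

import Mathlib

section GenericPolytopes

variable {V : Type*} [AddCommGroup V] [Module ℝ V]

/-- A polytope in a real vector space `V`: the convex hull of a finite set of points. -/
def IsPolytope (P : Set V) : Prop := ∃ t : Finset V, P = convexHull ℝ ↑t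

/-- The face of a set `Q ⊆ V` maximizing the linear functional `φ`. -/
def faceL (φ : V →ₗ[ℝ] ℝ) (Q : Set V) : Set V := {x ∈ Q | ∀ y ∈ Q, φ y ≤ φ x}

/-- `F` is a face of `Q` if it is the maximizing set of some linear functional on `Q`.
(Taking `φ = 0` shows `Q` is a face of itself.) -/
def IsFaceOf (Q F : Set V) : Prop := ∃ φ : V →ₗ[ℝ] ℝ, F = faceL φ Q

/-- The dimension of a subset of `V`: the dimension of its affine hull. -/
noncomputable def pdim (P : Set V) : ℕ := Module.finrank ℝ (vectorSpan ℝ P)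

/-- `S` is a subdivision of the polytope `Q`: a finite collection of polytopes of the same
dimension as `Q` whose vertices are vertices of `Q`, whose union is `Q`, and in which any
two distinct cells meet (if at all) in a proper face of both. -/
structure IsSubdivision (S : Finset (Set V)) (Q : Set V) : Prop where
  poly : ∀ P ∈ S, IsPolytope P
  dim_eq : ∀ P ∈ S, pdim P = pdim Q
  vertices_subset : ∀ P ∈ S, Set.extremePoints ℝ P ⊆ Set.extremePoints ℝ Q
  cover : ⋃₀ ↑S = Q
  inter_face : ∀ P ∈ S, ∀ P' ∈ S, P ≠ P' → (P ∩ P').Nonempty →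
    IsFaceOf P (P ∩ P') ∧ P ∩ P' ≠ P ∧ IsFaceOf P' (P ∩ P') ∧ P ∩ P' ≠ P'

/-- A face of a subdivision `S` is a face of one of its cells. -/
def IsFaceOfSubdivision (S : Finset (Set V)) (F : Set V) : Prop := ∃ P ∈ S, IsFaceOf P F

/-- An edge of a subdivision: a one-dimensional face of one of its cells. -/
def IsEdgeOfSubdivision (S : Finset (Set V)) (F : Set V) : Prop :=
  IsFaceOfSubdivision S F ∧ pdim F = 1

end GenericPolytopes

/-- The matroid polytope `Q(M)` of a matroid `M` on a finite type `β`: the convex hull of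
the indicator vectors of the bases of `M`. -/
noncomputable def mPolyG {β : Type*} [Fintype β] [DecidableEq β] (M : Matroid β) :
    Set (β → ℝ) :=
  convexHull ℝ {x | ∃ B : Finset β, M.IsBase ↑B ∧ x = fun a => if a ∈ B then (1 : ℝ) else 0}

/-!
If every cell of a subdivision of a product polytope `Q` is a box, that is, the product of its
projections, then the subdivision is a product. Indeed, let the `i`-th coordinate of a point `z` be
relatively interior to the `i`-th projection `c` of some cell. The slice of `Q` over `z i` is
connected, and the cells with `i`-th projection `c` and the remaining ones cut it into two disjoint
closed sets, so every cell containing `z` has `i`-th projection `c`. A point that is relatively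
interior in each coordinate to a prescribed projection thus lies in the product of these
projections, which is therefore a cell.

The cells at hand are boxes: a matroid whose polytope lies in `Q(M₁) × ⋯ × Q(M_k)` has bases that
meet the `i`-th block in exactly `rank Mᵢ` elements, so any choice of the blocks of such bases can
be glued to a base.
-/

section Faces

open Set

variable {V : Type*} [AddCommGroup V] [Module ℝ V] {P F : Set V}

lemma IsFaceOf.refl (P : Set V) : IsFaceOf P P :=
  ⟨0, by simp [faceL]⟩

lemma IsFaceOf.eq_of_vectorSpan_eq (hF : IsFaceOf P F) (hne : F.Nonempty)
    (hspan : vectorSpan ℝ F = vectorSpan ℝ P) : F = P := by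
  obtain ⟨φ, rfl⟩ := hF
  obtain ⟨x, hxP, hx⟩ := hne
  have hker : vectorSpan ℝ (faceL φ P) ≤ LinearMap.ker φ := by
    refine Submodule.span_le.2 ?_
    rintro _ ⟨a, ha, b, hb, rfl⟩
    have hab : φ a = φ b := le_antisymm (hb.2 a ha.1) (ha.2 b hb.1)
    simp [hab]
  refine Subset.antisymm (sep_subset _ _) fun y hy => ⟨hy, fun z hz => ?_⟩
  have hyx : φ (y - x) = 0 := hker (hspan ▸ vsub_mem_vectorSpan ℝ hy hxP)
  rw [sub_eq_zero.1 ((map_sub φ y x).symm.trans hyx)]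
  exact hx z hz

/-- The points of `P` that lie in no proper face of `P`. For a polytope this is the relative
interior, but the definition makes sense without a topology. -/
def faceInterior (P : Set V) : Set V := {x ∈ P | ∀ F, IsFaceOf P F → x ∈ F → F = P}

-- The barycentre of the spanning points works: a functional that is at most its mean is constant.
lemma IsPolytope.faceInterior_nonempty (hP : IsPolytope P) (hne : P.Nonempty) :
    (faceInterior P).Nonempty := by
  obtain ⟨t, rfl⟩ := hP
  have ht : t.Nonempty := by simpa using hne
  set x := t.centerMass (fun _ => (1 : ℝ)) id with hx
  have hmean (φ : V →ₗ[ℝ] ℝ) : ∑ v ∈ t, φ v = ∑ _v ∈ t, φ x := by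
    simp [hx, Finset.centerMass, ht.card_ne_zero]
  refine ⟨x, t.centerMass_mem_convexHull (fun _ _ => zero_le_one) (by simpa using ht)
    fun v hv => hv, ?_⟩
  rintro _ ⟨φ, rfl⟩ ⟨-, hmax⟩
  have heq : ∀ v ∈ t, φ v = φ x :=
    (Finset.sum_eq_sum_iff_of_le fun v hv => hmax v (subset_convexHull ℝ _ hv)).1 (hmean φ)
  have hconst : ∀ y ∈ convexHull ℝ (t : Set V), φ y = φ x := fun y hy =>
    convexHull_min (t := {y | φ y = φ x}) heq (convex_hyperplane φ.isLinear _) hy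
  refine Subset.antisymm (sep_subset _ _) fun y hy => ⟨hy, fun z hz => ?_⟩
  rw [hconst z hz, hconst y hy]

lemma eq_of_mem_faceInterior {A B : Set V} {x : V} (hA : IsFaceOf A (A ∩ B))
    (hB : IsFaceOf B (B ∩ A)) (hspan : vectorSpan ℝ A = vectorSpan ℝ B)
    (hxA : x ∈ faceInterior A) (hxB : x ∈ B) : A = B := by
  have hAB : A ∩ B = A := hxA.2 _ hA ⟨hxA.1, hxB⟩
  rw [inter_comm, hAB] at hB
  exact hB.eq_of_vectorSpan_eq ⟨x, hxA.1⟩ hspan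

lemma IsPolytope.image {W : Type*} [AddCommGroup W] [Module ℝ W] (hP : IsPolytope P)
    (f : V →ₗ[ℝ] W) : IsPolytope (f '' P) := by
  classical
  obtain ⟨t, rfl⟩ := hP
  exact ⟨t.image f, by rw [f.image_convexHull, Finset.coe_image]⟩

lemma IsPolytope.isCompact [TopologicalSpace V] [IsTopologicalAddGroup V] [ContinuousSMul ℝ V]
    (hP : IsPolytope P) : IsCompact P := by
  obtain ⟨t, rfl⟩ := hP
  exact t.finite_toSet.isCompact_convexHull ℝ

end Faces

section Subdivisions

open Set

variable {V : Type*} [AddCommGroup V] [Module ℝ V] {S : Finset (Set V)} {P P' Q : Set V}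

lemma IsSubdivision.subset (hS : IsSubdivision S Q) (hP : P ∈ S) : P ⊆ Q :=
  hS.cover ▸ subset_sUnion_of_mem hP

lemma IsSubdivision.vectorSpan_eq [FiniteDimensional ℝ V] (hS : IsSubdivision S Q) (hP : P ∈ S) :
    vectorSpan ℝ P = vectorSpan ℝ Q :=
  Submodule.eq_of_le_of_finrank_eq (vectorSpan_mono ℝ (hS.subset hP)) (hS.dim_eq P hP)

lemma IsSubdivision.isFaceOf_inter (hS : IsSubdivision S Q) (hP : P ∈ S) (hP' : P' ∈ S)
    (hne : (P ∩ P').Nonempty) : IsFaceOf P (P ∩ P') := by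
  rcases eq_or_ne P P' with rfl | h
  · rw [inter_self]
    exact .refl P
  · exact (hS.inter_face P hP P' hP' h hne).1

lemma IsSubdivision.isClosed_sUnion [TopologicalSpace V] [IsTopologicalAddGroup V]
    [ContinuousSMul ℝ V] [T2Space V] (hS : IsSubdivision S Q) {T : Set (Set V)} (hT : T ⊆ ↑S) :
    IsClosed (⋃₀ T) := by
  rw [sUnion_eq_biUnion]
  exact (S.finite_toSet.subset hT).isClosed_biUnion fun P hP =>
    (hS.poly P (hT hP)).isCompact.isClosed

lemma IsSubdivision.of_isFaceOf_inter (hpoly : ∀ P ∈ S, IsPolytope P)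
    (hspan : ∀ P ∈ S, vectorSpan ℝ P = vectorSpan ℝ Q)
    (hvert : ∀ P ∈ S, extremePoints ℝ P ⊆ extremePoints ℝ Q) (hcover : ⋃₀ ↑S = Q)
    (hface : ∀ P ∈ S, ∀ P' ∈ S, (P ∩ P').Nonempty → IsFaceOf P (P ∩ P')) :
    IsSubdivision S Q := by
  have hproper : ∀ P ∈ S, ∀ P' ∈ S, P ≠ P' → (P ∩ P').Nonempty → P ∩ P' ≠ P := by
    intro P hP P' hP' hPP' hne heq
    have hF := hface P' hP' P hP (inter_comm P P' ▸ hne)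
    rw [inter_comm, heq] at hF
    exact hPP' (hF.eq_of_vectorSpan_eq (heq ▸ hne) ((hspan P hP).trans (hspan P' hP').symm))
  refine ⟨hpoly, fun P hP => by rw [pdim, pdim, hspan P hP], hvert, hcover, ?_⟩
  intro P hP P' hP' hPP' hne
  refine ⟨hface P hP P' hP' hne, hproper P hP P' hP' hPP' hne, ?_⟩
  rw [inter_comm] at hne ⊢
  exact ⟨hface P' hP' P hP hne, hproper P' hP' P hP hPP'.symm hne⟩

end Subdivisions

section Boxes

open Set

variable {ι : Type*} {E : ι → Type*}

/-- A nonempty set in a product space that is the product of its projections. -/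
structure IsBox (P : Set (∀ i, E i)) : Prop where
  nonempty : P.Nonempty
  pi_eval_image : univ.pi (fun i => Function.eval i '' P) = P

lemma isBox_univ_pi {c : ∀ i, Set (E i)} (hc : (univ.pi c).Nonempty) : IsBox (univ.pi c) :=
  ⟨hc, congr_arg univ.pi (funext fun _ => eval_image_univ_pi hc)⟩

variable {P P' : Set (∀ i, E i)}

lemma IsBox.update_mem [DecidableEq ι] (hP : IsBox P) {z : ∀ i, E i} (hz : z ∈ P) {i : ι} {x : E i}
    (hx : x ∈ Function.eval i '' P) : Function.update z i x ∈ P := by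
  rw [← hP.pi_eval_image] at hz ⊢
  exact (update_mem_pi_iff_of_mem hz).2 fun _ => hx

lemma IsBox.eval_image_inter (hP : IsBox P) (hP' : IsBox P') (hne : (P ∩ P').Nonempty) (i : ι) :
    Function.eval i '' (P ∩ P') = Function.eval i '' P ∩ Function.eval i '' P' := by
  have hpi : P ∩ P' = univ.pi fun i => Function.eval i '' P ∩ Function.eval i '' P' := by
    rw [pi_inter_distrib, hP.pi_eval_image, hP'.pi_eval_image]
  rw [hpi] at hne ⊢
  exact eval_image_univ_pi hne

variable [∀ i, AddCommGroup (E i)] [∀ i, Module ℝ (E i)]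

lemma IsBox.extremePoints_eval_image (hP : IsBox P) (hne : (extremePoints ℝ P).Nonempty) (i : ι) :
    extremePoints ℝ (Function.eval i '' P) = Function.eval i '' extremePoints ℝ P := by
  rw [← hP.pi_eval_image, extremePoints_pi] at hne
  conv_rhs => rw [← hP.pi_eval_image, extremePoints_pi]
  exact (eval_image_univ_pi hne).symm

lemma IsBox.convexHull [Finite ι] (hP : IsBox P) : IsBox (convexHull ℝ P) := by
  rw [← hP.pi_eval_image, convexHull_pi]
  refine isBox_univ_pi (univ_pi_nonempty_iff.2 fun i => ?_)
  exact (hP.nonempty.image _).convexHull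

lemma IsFaceOf.eval_image {F : Set (∀ i, E i)} (hF : IsFaceOf P F) (hP : IsBox P)
    (hne : F.Nonempty) (i : ι) : IsFaceOf (Function.eval i '' P) (Function.eval i '' F) := by
  classical
  obtain ⟨φ, rfl⟩ := hF
  obtain ⟨z, hzP, hz⟩ := hne
  have hupdate (w : ∀ i, E i) (x : E i) : φ (Function.update w i x)
      = φ w - φ.comp (LinearMap.single ℝ E i) (w i) + φ.comp (LinearMap.single ℝ E i) x := by
    simp [Pi.update_eq_sub_add_single]
  refine ⟨φ.comp (LinearMap.single ℝ E i), Subset.antisymm ?_ ?_⟩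
  · rintro _ ⟨w, ⟨hwP, hw⟩, rfl⟩
    refine ⟨mem_image_of_mem _ hwP, fun y hy => ?_⟩
    have := hw _ (hP.update_mem hwP hy)
    rw [hupdate] at this
    linarith
  · rintro x ⟨hxP, hx⟩
    refine ⟨Function.update z i x, ⟨hP.update_mem hzP hxP, fun y hy => ?_⟩, by simp⟩
    have := hx (z i) (mem_image_of_mem _ hzP)
    rw [hupdate]
    linarith [hz y hy]

end Boxes

section FactorFaces

open Set

variable {ι : Type*} {E : ι → Type*}

open scoped Classical in
/-- The `i`-th factor of a family `S` of cells in a product space: the projections of the cells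
to the `i`-th coordinate. -/
noncomputable def factorCells (S : Finset (Set (∀ i, E i))) (i : ι) : Finset (Set (E i)) :=
  S.image (Function.eval i '' ·)

lemma mem_factorCells {S : Finset (Set (∀ i, E i))} {i : ι} {c : Set (E i)} :
    c ∈ factorCells S i ↔ ∃ P ∈ S, Function.eval i '' P = c := by
  simp [factorCells]

variable [∀ i, AddCommGroup (E i)] [∀ i, Module ℝ (E i)]
  {S : Finset (Set (∀ i, E i))} {P P' Q : Set (∀ i, E i)}

lemma IsSubdivision.isFaceOf_eval_image_inter (hS : IsSubdivision S Q) (hbox : ∀ P ∈ S, IsBox P)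
    (hP : P ∈ S) (hP' : P' ∈ S) (hne : (P ∩ P').Nonempty) (i : ι) :
    IsFaceOf (Function.eval i '' P) (Function.eval i '' P ∩ Function.eval i '' P') := by
  rw [← (hbox P hP).eval_image_inter (hbox P' hP') hne]
  exact (hS.isFaceOf_inter hP hP' hne).eval_image (hbox P hP) hne i

variable [Finite ι] [∀ i, FiniteDimensional ℝ (E i)]

lemma IsSubdivision.vectorSpan_eval_image_eq (hS : IsSubdivision S Q) (hP : P ∈ S) (i : ι) :
    vectorSpan ℝ (Function.eval i '' P) = vectorSpan ℝ (Function.eval i '' Q) := by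
  have hmap (T : Set (∀ i, E i)) : (vectorSpan ℝ T).map (LinearMap.proj i : _ →ₗ[ℝ] E i)
      = vectorSpan ℝ (Function.eval i '' T) :=
    (LinearMap.proj i : (∀ i, E i) →ₗ[ℝ] E i).toAffineMap.map_vectorSpan
  rw [← hmap, ← hmap, hS.vectorSpan_eq hP]

lemma IsSubdivision.eval_image_eq_of_mem_inter (hS : IsSubdivision S Q)
    (hbox : ∀ P ∈ S, IsBox P) (hP : P ∈ S) (hP' : P' ∈ S) {z : ∀ i, E i} (hz : z ∈ P ∩ P') {i : ι}
    (hzi : z i ∈ faceInterior (Function.eval i '' P)) :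
    Function.eval i '' P = Function.eval i '' P' :=
  eq_of_mem_faceInterior (hS.isFaceOf_eval_image_inter hbox hP hP' ⟨z, hz⟩ i)
    (hS.isFaceOf_eval_image_inter hbox hP' hP ⟨z, hz.symm⟩ i)
    ((hS.vectorSpan_eval_image_eq hP i).trans (hS.vectorSpan_eval_image_eq hP' i).symm)
    hzi (mem_image_of_mem _ hz.2)

end FactorFaces

section BoxSubdivisions

open Set

variable {ι : Type*} [Finite ι] {E : ι → Type*} [∀ i, NormedAddCommGroup (E i)]
  [∀ i, NormedSpace ℝ (E i)] [∀ i, FiniteDimensional ℝ (E i)]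
  {S : Finset (Set (∀ i, E i))} {P P' Q : Set (∀ i, E i)}

lemma IsSubdivision.eval_image_eq_of_mem (hS : IsSubdivision S Q) (hbox : ∀ P ∈ S, IsBox P)
    (hQ : Convex ℝ Q) (hP : P ∈ S) (hP' : P' ∈ S) {z : ∀ i, E i} (hz : z ∈ P') {i : ι}
    (hzi : z i ∈ faceInterior (Function.eval i '' P)) :
    Function.eval i '' P' = Function.eval i '' P := by
  let slice := Q ∩ Function.eval i ⁻¹' {z i}
  let same := {R ∈ (S : Set (Set (∀ i, E i))) | Function.eval i '' R = Function.eval i '' P}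
  let other := {R ∈ (S : Set (Set (∀ i, E i))) | Function.eval i '' R ≠ Function.eval i '' P}
  have hconn : IsPreconnected slice := (hQ.inter
    ((convex_singleton (z i)).linear_preimage (LinearMap.proj i))).isPreconnected
  have hcover : slice ⊆ ⋃₀ same ∪ ⋃₀ other := by
    rintro w ⟨hw, -⟩
    obtain ⟨R, hR, hwR⟩ := hS.cover.ge hw
    rcases eq_or_ne (Function.eval i '' R) (Function.eval i '' P) with h | h
    · exact .inl ⟨R, ⟨hR, h⟩, hwR⟩
    · exact .inr ⟨R, ⟨hR, h⟩, hwR⟩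
  have hmeet {R R' : Set (∀ i, E i)} {w : ∀ i, E i} (hR : R ∈ same) (hR' : R' ∈ S)
      (hw : w ∈ R ∩ R') (hwi : w i = z i) : Function.eval i '' R' = Function.eval i '' P := by
    have hwR : w i ∈ faceInterior (Function.eval i '' R) := by rwa [hR.2, hwi]
    exact (hS.eval_image_eq_of_mem_inter hbox hR.1 hR' hw hwR).symm.trans hR.2
  have hdisj : slice ∩ (⋃₀ same ∩ ⋃₀ other) = ∅ := by
    refine eq_empty_of_forall_notMem ?_
    rintro w ⟨⟨-, hwi⟩, ⟨R, hR, hwR⟩, ⟨R', hR', hwR'⟩⟩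
    exact hR'.2 (hmeet hR hR'.1 ⟨hwR, hwR'⟩ hwi)
  rcases isPreconnected_iff_subset_of_disjoint_closed.1 hconn _ _
    (hS.isClosed_sUnion (sep_subset _ _)) (hS.isClosed_sUnion (sep_subset _ _)) hcover hdisj
    with hsame | hother
  · obtain ⟨R, hR, hzR⟩ := hsame ⟨hS.subset hP' hz, rfl⟩
    exact hmeet hR hP' ⟨hzR, hz⟩ rfl
  · obtain ⟨w, hw, hwi⟩ := hzi.1
    obtain ⟨R, hR, hwR⟩ := hother ⟨hS.subset hP hw, hwi⟩
    exact (hR.2 (hmeet ⟨hP, rfl⟩ hR.1 ⟨hw, hwR⟩ hwi)).elim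

lemma IsSubdivision.pi_mem (hS : IsSubdivision S Q) (hbox : ∀ P ∈ S, IsBox P) (hQ : Convex ℝ Q)
    (hQbox : IsBox Q) {c : ∀ i, Set (E i)} (hc : ∀ i, c i ∈ factorCells S i) : univ.pi c ∈ S := by
  choose R hR hRc using fun i => mem_factorCells.1 (hc i)
  obtain rfl : (fun i => Function.eval i '' R i) = c := funext hRc
  choose x hx using fun i => ((hS.poly _ (hR i)).image (LinearMap.proj i)).faceInterior_nonempty
    ((hbox _ (hR i)).nonempty.image _)
  have hxQ : x ∈ Q := by
    rw [← hQbox.pi_eval_image]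
    exact fun i _ => image_mono (hS.subset (hR i)) (hx i).1
  obtain ⟨P, hP, hxP⟩ := hS.cover.ge hxQ
  have hfactor (i : ι) : Function.eval i '' P = Function.eval i '' R i :=
    hS.eval_image_eq_of_mem hbox hQ (hR i) hP hxP (hx i)
  rwa [← funext hfactor, (hbox P hP).pi_eval_image]

lemma IsSubdivision.mem_iff_exists_factorCells (hS : IsSubdivision S Q) (hbox : ∀ P ∈ S, IsBox P)
    (hQ : Convex ℝ Q) (hQbox : IsBox Q) :
    P ∈ S ↔ ∃ c : ∀ i, Set (E i), (∀ i, c i ∈ factorCells S i) ∧ P = univ.pi c := by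
  constructor
  · intro hP
    exact ⟨fun i => Function.eval i '' P, fun i => mem_factorCells.2 ⟨P, hP, rfl⟩,
      (hbox P hP).pi_eval_image.symm⟩
  · rintro ⟨c, hc, rfl⟩
    exact hS.pi_mem hbox hQ hQbox hc

lemma IsSubdivision.isFaceOf_inter_factorCells (hS : IsSubdivision S Q) (hbox : ∀ P ∈ S, IsBox P)
    (hQ : Convex ℝ Q) (hQbox : IsBox Q) {i : ι} {c c' : Set (E i)} (hc : c ∈ factorCells S i)
    (hc' : c' ∈ factorCells S i) (hne : (c ∩ c').Nonempty) : IsFaceOf c (c ∩ c') := by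
  classical
  obtain ⟨P, hP, rfl⟩ := mem_factorCells.1 hc
  obtain ⟨x, hx, hx'⟩ := hne
  obtain ⟨w, hw⟩ := (hbox P hP).nonempty
  let d := Function.update (fun j => Function.eval j '' P) i c'
  have hd : univ.pi d ∈ S := by
    refine hS.pi_mem hbox hQ hQbox fun j => ?_
    rcases eq_or_ne j i with rfl | hj
    · simpa [d] using hc'
    · simpa [d, hj] using mem_factorCells.2 ⟨P, hP, rfl⟩
  have hmem : Function.update w i x ∈ univ.pi d := by
    intro j _
    rcases eq_or_ne j i with rfl | hj
    · simpa [d] using hx'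
    · simpa [d, hj] using ⟨w, hw, rfl⟩
  have hdi : Function.eval i '' univ.pi d = c' := by
    simpa [d] using eval_image_univ_pi (i := i) ⟨_, hmem⟩
  have hface := hS.isFaceOf_eval_image_inter hbox hP hd
    ⟨_, (hbox P hP).update_mem hw hx, hmem⟩ i
  rwa [hdi] at hface

lemma IsSubdivision.isSubdivision_factorCells (hS : IsSubdivision S Q) (hbox : ∀ P ∈ S, IsBox P)
    (hQ : Convex ℝ Q) (hQbox : IsBox Q) (i : ι) :
    IsSubdivision (factorCells S i) (Function.eval i '' Q) := by
  refine .of_isFaceOf_inter ?_ ?_ ?_ ?_ fun c hc c' hc' =>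
    hS.isFaceOf_inter_factorCells hbox hQ hQbox hc hc'
  · intro c hc
    obtain ⟨P, hP, rfl⟩ := mem_factorCells.1 hc
    exact (hS.poly P hP).image (LinearMap.proj i)
  · intro c hc
    obtain ⟨P, hP, rfl⟩ := mem_factorCells.1 hc
    exact hS.vectorSpan_eval_image_eq hP i
  · intro c hc
    obtain ⟨P, hP, rfl⟩ := mem_factorCells.1 hc
    have hext : (extremePoints ℝ P).Nonempty :=
      (hS.poly P hP).isCompact.extremePoints_nonempty (hbox P hP).nonempty
    rw [(hbox P hP).extremePoints_eval_image hext,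
      hQbox.extremePoints_eval_image (hext.mono (hS.vertices_subset P hP))]
    exact image_mono (hS.vertices_subset P hP)
  · rw [← hS.cover, sUnion_eq_biUnion, sUnion_eq_biUnion, image_iUnion₂]
    ext x
    simp [mem_factorCells]

end BoxSubdivisions

section MatroidBases

open Set

variable {γ : Type*} {M : Matroid γ} [M.RankFinite]

lemma isBasis'_inter_of_forall_ncard_le {B X : Set γ} (hB : M.IsBase B)
    (hX : ∀ B', M.IsBase B' → (B' ∩ X).ncard ≤ (B ∩ X).ncard) : M.IsBasis' (B ∩ X) X := by
  obtain ⟨J, hJ, hBJ⟩ := (hB.indep.inter_right X).subset_isBasis'_of_subset inter_subset_right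
  obtain ⟨B', hB', hJB'⟩ := hJ.indep.exists_isBase_superset
  have hJX : J ⊆ B' ∩ X := subset_inter hJB' hJ.subset
  have heq : B ∩ X = B' ∩ X :=
    eq_of_subset_of_ncard_le (hBJ.trans hJX) (hX B' hB') (hB'.finite.inter_of_left X)
  rwa [hBJ.antisymm (heq ▸ hJX)]

-- Each `B i` spans its own block, so the glued set is spanning, and it has the size of a base.
lemma isBase_glue {ι : Type*} {f : γ → ι} {r : ι → ℕ}
    (hr : ∀ B, M.IsBase B → ∀ i, (B ∩ f ⁻¹' {i}).ncard = r i) {B : ι → Set γ}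
    (hB : ∀ i, M.IsBase (B i)) : M.IsBase {x | x ∈ B (f x)} := by
  have hglue : {x | x ∈ B (f x)} = ⋃ i, B i ∩ f ⁻¹' {i} := by ext; simp
  have hblock (i : ι) : M.closure (B i ∩ f ⁻¹' {i}) = M.closure (f ⁻¹' {i}) :=
    (isBasis'_inter_of_forall_ncard_le (hB i) fun B' hB' =>
      (hr B' hB' i).trans_le (hr _ (hB i) i).ge).closure_eq_closure
  have hspan : M.Spanning {x | x ∈ B (f x)} := by
    refine ⟨?_, fun x hx => (hB (f x)).subset_ground hx⟩
    rw [hglue, M.closure_iUnion_congr _ _ hblock, ← preimage_iUnion, iUnion_of_singleton,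
      preimage_univ, M.closure_univ]
  obtain ⟨B', hB', hsub⟩ := hspan.exists_isBase_subset
  have heq (i : ι) : B' ∩ f ⁻¹' {i} = B i ∩ f ⁻¹' {i} := by
    refine eq_of_subset_of_ncard_le ?_ ((hr _ (hB i) i).trans_le (hr B' hB' i).ge)
      ((hB i).finite.inter_of_left _)
    rintro x ⟨hx, rfl⟩
    exact ⟨hsub hx, rfl⟩
  rwa [hglue, ← iUnion_congr heq, ← inter_iUnion, ← preimage_iUnion, iUnion_of_singleton,
    preimage_univ, inter_univ]

end MatroidBases

section MatroidPolytopes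

open Set

lemma sum_eq_eRank_of_mem_mPolyG {β : Type*} [Fintype β] [DecidableEq β] {M : Matroid β}
    {x : β → ℝ} (hx : x ∈ mPolyG M) : ∑ a, x a = M.eRank.toNat := by
  let φ : (β → ℝ) →ₗ[ℝ] ℝ := ∑ a, LinearMap.proj a
  suffices hφ : φ x = M.eRank.toNat by simpa [φ] using hφ
  refine convexHull_min (t := {y | φ y = M.eRank.toNat}) ?_ (convex_hyperplane φ.isLinear _) hx
  rintro _ ⟨B, hB, rfl⟩
  simp [φ, ← hB.encard_eq_eRank]

lemma mPolyG_nonempty {β : Type*} [Fintype β] [DecidableEq β] (M : Matroid β) :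
    (mPolyG M).Nonempty := by
  obtain ⟨B, hB⟩ := M.exists_isBase
  exact ⟨_, subset_convexHull ℝ _ ⟨B.toFinite.toFinset, by simpa using hB, rfl⟩⟩

variable {ι : Type*} [DecidableEq ι] {α : ι → Type*} [∀ i, DecidableEq (α i)]

/-- The indicator vectors of the bases of a matroid on a disjoint union `⨿ i, α i`, as points of
`∏ i, ℝ^{α i}`. -/
def sigmaVertices (M : Matroid ((i : ι) × α i)) : Set ((i : ι) → α i → ℝ) :=
  {x | ∃ B : Finset ((i : ι) × α i), M.IsBase ↑B ∧
    x = fun i a => if (⟨i, a⟩ : (i : ι) × α i) ∈ B then (1 : ℝ) else 0}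

variable [Finite ι]

lemma sigmaVertices_sigma [∀ i, Finite (α i)] (M : ∀ i, Matroid (α i)) :
    sigmaVertices (Matroid.sigma M) = {x | ∃ B : (i : ι) → Finset (α i),
      (∀ i, (M i).IsBase ↑(B i)) ∧ x = fun i a => if a ∈ B i then (1 : ℝ) else 0} := by
  have := Fintype.ofFinite ι
  have (i : ι) := Fintype.ofFinite (α i)
  ext x
  constructor
  · rintro ⟨B, hB, rfl⟩
    exact ⟨fun i => {a | ⟨i, a⟩ ∈ B}, fun i => by simpa using! hB i, by simp⟩
  · rintro ⟨B, hB, rfl⟩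
    refine ⟨Finset.univ.sigma B, fun i => ?_, by simp⟩
    convert! hB i
    simp

lemma isBox_sigmaVertices [∀ i, Finite (α i)] {M : Matroid ((i : ι) × α i)} {r : ι → ℕ}
    (hr : ∀ B, M.IsBase B → ∀ i, (B ∩ Sigma.fst ⁻¹' {i}).ncard = r i) :
    IsBox (sigmaVertices M) := by
  have := Fintype.ofFinite ι
  have (i : ι) := Fintype.ofFinite (α i)
  obtain ⟨B₀, hB₀⟩ := M.exists_isBase
  refine ⟨⟨_, B₀.toFinite.toFinset, by simpa using hB₀, rfl⟩,
    Subset.antisymm (fun x hx => ?_) (subset_pi_eval_image univ _)⟩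
  choose y hy hyx using fun i => hx i trivial
  choose B hB hBy using hy
  refine ⟨({z | z ∈ B z.1} : Finset _), by simpa using! isBase_glue hr hB, ?_⟩
  ext i a
  rw [← hyx i]
  simp [hBy i]

variable [∀ i, Fintype (α i)]

lemma convexHull_sigmaVertices_sigma (M : ∀ i, Matroid (α i)) :
    convexHull ℝ (sigmaVertices (Matroid.sigma M)) = univ.pi fun i => mPolyG (M i) := by
  have hpi : sigmaVertices (Matroid.sigma M) = univ.pi fun i => {x | ∃ B : Finset (α i),
      (M i).IsBase ↑B ∧ x = fun a => if a ∈ B then (1 : ℝ) else 0} := by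
    ext x
    simp [sigmaVertices_sigma, Classical.skolem, forall_and, funext_iff]
  rw [hpi, convexHull_pi]
  rfl

lemma ncard_inter_block_of_sigmaVertices_subset {M : ∀ i, Matroid (α i)}
    {M' : Matroid ((i : ι) × α i)} (hsub : sigmaVertices M' ⊆ univ.pi fun i => mPolyG (M i))
    {B : Set ((i : ι) × α i)} (hB : M'.IsBase B) (i : ι) :
    (B ∩ Sigma.fst ⁻¹' {i}).ncard = (M i).eRank.toNat := by
  obtain ⟨B, rfl⟩ := B.toFinite.exists_finset_coe
  have hsum := sum_eq_eRank_of_mem_mPolyG (hsub ⟨B, hB, rfl⟩ i trivial)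
  have hcard : (↑B ∩ Sigma.fst ⁻¹' {i} : Set ((i : ι) × α i)).ncard
      = (Finset.univ.filter fun a : α i => (⟨i, a⟩ : (i : ι) × α i) ∈ B).card := by
    rw [← range_sigmaMk, ← image_preimage_eq_inter_range,
      ncard_image_of_injective _ sigma_mk_injective, ← ncard_coe_finset]
    simp [preimage]
  rw [Finset.sum_boole] at hsum
  rw [hcard]
  exact_mod_cast hsum

lemma isBox_convexHull_sigmaVertices {M : ∀ i, Matroid (α i)} {M' : Matroid ((i : ι) × α i)}
    (hsub : convexHull ℝ (sigmaVertices M') ⊆ univ.pi fun i => mPolyG (M i)) :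
    IsBox (convexHull ℝ (sigmaVertices M')) :=
  (isBox_sigmaVertices fun _ hB => ncard_inter_block_of_sigmaVertices_subset
    ((subset_convexHull ℝ _).trans hsub) hB).convexHull

end MatroidPolytopes

theorem matroid_subdivision_of_directSum_general {ι : Type*} [Finite ι] [DecidableEq ι]
    {α : ι → Type*} [∀ i, Fintype (α i)] [∀ i, DecidableEq (α i)] (M : ∀ i, Matroid (α i))
    (S : Finset (Set ((i : ι) → α i → ℝ)))
    (hS : IsSubdivision S (convexHull ℝ (sigmaVertices (Matroid.sigma M))))
    (hcells : ∀ P ∈ S, ∃ M' : Matroid ((i : ι) × α i), P = convexHull ℝ (sigmaVertices M')) :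
    ∃ Si : (i : ι) → Finset (Set (α i → ℝ)),
      (∀ i, IsSubdivision (Si i) (mPolyG (M i))) ∧
      (↑S : Set (Set ((i : ι) → α i → ℝ))) =
        {P | ∃ c : (i : ι) → Set (α i → ℝ), (∀ i, c i ∈ Si i) ∧ P = {x | ∀ i, x i ∈ c i}} := by
  rw [convexHull_sigmaVertices_sigma] at hS
  have hne : (Set.univ.pi fun i => mPolyG (M i)).Nonempty :=
    Set.univ_pi_nonempty_iff.2 fun i => mPolyG_nonempty (M i)
  have hconv : Convex ℝ (Set.univ.pi fun i => mPolyG (M i)) :=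
    convex_pi fun i _ => convex_convexHull ℝ _
  have hbox : ∀ P ∈ S, IsBox P := by
    intro P hP
    obtain ⟨M', rfl⟩ := hcells P hP
    exact isBox_convexHull_sigmaVertices (hS.subset hP)
  refine ⟨factorCells S, fun i => ?_, ?_⟩
  · rw [← Set.eval_image_univ_pi (i := i) hne]
    exact hS.isSubdivision_factorCells hbox hconv (isBox_univ_pi hne) i
  · ext P
    rw [Finset.mem_coe, hS.mem_iff_exists_factorCells hbox hconv (isBox_univ_pi hne)]
    simp only [Set.pi, Set.mem_univ, forall_const, Set.mem_ofPred_eq]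

/-- Let `M₁, …, M_k` be matroids on pairwise disjoint ground sets and let
`S` be a matroid polytope subdivision of the matroid polytope of their direct sum
`Q(M₁ ⊕ ⋯ ⊕ M_k)`.  Under the identification `Q(M₁ ⊕ ⋯ ⊕ M_k) ≅ Q(M₁) × ⋯ × Q(M_k)`
(realized here by working in the product space `∏ i, ℝ^{α i}`, in which the indicator
vector of a union of bases corresponds to the tuple of indicator vectors), one has
`S = S₁ × ⋯ × S_k` where each `Sᵢ` is a subdivision of `Q(Mᵢ)`. -/
theorem matroid_subdivision_of_directSum {k : ℕ} (hk : 0 < k)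
    (α : Fin k → Type*) [∀ i, Fintype (α i)] [∀ i, DecidableEq (α i)]
    (Mi : ∀ i, Matroid (α i)) (hEi : ∀ i, (Mi i).E = Set.univ)
    (Q : Set ((i : Fin k) → α i → ℝ))
    (hQ : Q = convexHull ℝ {x | ∃ B : (i : Fin k) → Finset (α i),
      (∀ i, (Mi i).IsBase ↑(B i)) ∧ x = fun i a => if a ∈ B i then (1 : ℝ) else 0})
    (S : Finset (Set ((i : Fin k) → α i → ℝ)))
    (hS : IsSubdivision S Q)
    (hcells : ∀ P ∈ S, ∃ M' : Matroid ((i : Fin k) × α i),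
      P = convexHull ℝ {x | ∃ B : Finset ((i : Fin k) × α i), M'.IsBase ↑B ∧
        x = fun i a => if (⟨i, a⟩ : (i : Fin k) × α i) ∈ B then (1 : ℝ) else 0}) :
    ∃ Si : (i : Fin k) → Finset (Set (α i → ℝ)),
      (∀ i, IsSubdivision (Si i) (mPolyG (Mi i))) ∧
      (↑S : Set (Set ((i : Fin k) → α i → ℝ))) =
        {P | ∃ c : (i : Fin k) → Set (α i → ℝ),
          (∀ i, c i ∈ Si i) ∧ P = {x | ∀ i, x i ∈ c i}} := by
  subst hQ
  exact matroid_subdivision_of_directSum_general Mi S (sigmaVertices_sigma Mi ▸ hS) hcells
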